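/- Let k ≥ 1 be an integer, let m and q be positive integers with q ≥ 2, and let X > 1. Then Σ_{ℓ ≥ 1} e^{−mℓq/X} (log(m + ℓq))^k / (m + ℓq) ≤ (C_k/q) · ( (log m)^k + (log X)^k + (log(m + X/m))^{k+1} ), where C_k > 0 depends only on k. -/

import Mathlib

/-- One telescoping step: `q` times the value of `1/(a+t) - 1/(b+t)` at the right end of the
interval `[0, q]` is at most its integral over that interval. -/
lemma mul_inv_sub_inv_le_log_div_sub_log_div {a b q : ℝ} (ha : 0 < a) (hab : a ≤ b)
    (hq : 0 ≤ q) :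
    q * (1 / (a + q) - 1 / (b + q)) ≤ Real.log (b / a) - Real.log ((b + q) / (a + q)) := by
  have hb : 0 < b := ha.trans_le hab
  have haq : 0 < a + q := by positivity
  have hbq : 0 < b + q := by positivity
  rw [← Real.log_div (by positivity) (by positivity)]
  refine le_trans ?_ (Real.one_sub_inv_le_log_of_pos (by positivity))
  have h : 1 - (b / a / ((b + q) / (a + q)))⁻¹ - q * (1 / (a + q) - 1 / (b + q)) =
      q ^ 2 * (b - a) / (b * (a + q) * (b + q)) := by
    field_simp
    ring
  have : 0 ≤ q ^ 2 * (b - a) / (b * (a + q) * (b + q)) := by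
    have := sub_nonneg.2 hab
    positivity
  linarith

lemma sum_range_inv_sub_inv_le {m A q : ℝ} (hm : 0 < m) (hmA : m ≤ A) (hq : 0 < q) (n : ℕ) :
    ∑ i ∈ Finset.range n, (1 / (m + ((i : ℝ) + 1) * q) - 1 / (A + ((i : ℝ) + 1) * q)) ≤
      Real.log (A / m) / q := by
  have hstep : ∀ i ∈ Finset.range n,
      q * (1 / (m + ((i : ℝ) + 1) * q) - 1 / (A + ((i : ℝ) + 1) * q)) ≤
        Real.log ((A + (i : ℝ) * q) / (m + (i : ℝ) * q)) -
          Real.log ((A + ((i + 1 : ℕ) : ℝ) * q) / (m + ((i + 1 : ℕ) : ℝ) * q)) := by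
    intro i _
    have h := mul_inv_sub_inv_le_log_div_sub_log_div (a := m + (i : ℝ) * q)
      (b := A + (i : ℝ) * q) (by positivity) (by linarith) hq.le
    push_cast
    simpa only [add_mul, one_mul, add_assoc] using h
  have hsum := Finset.sum_le_sum hstep
  rw [← Finset.mul_sum, Finset.sum_range_sub'] at hsum
  have hlog : 0 ≤ Real.log ((A + (n : ℝ) * q) / (m + (n : ℝ) * q)) :=
    Real.log_nonneg ((one_le_div (by positivity)).2 (by linarith))
  rw [le_div_iff₀' hq]
  simp only [Nat.cast_zero, zero_mul, add_zero] at hsum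
  linarith

lemma exp_neg_mul_add_pow_le {k : ℕ} (hk : 0 < k) {L u : ℝ} (hL : 1 / 2 ≤ L) (hu : 0 ≤ u) :
    Real.exp (-u) * (L + u) ^ k ≤ (4 * k) ^ k * L ^ k * Real.exp (-(u / 2)) := by
  have hk1 : (1 : ℝ) ≤ k := by exact_mod_cast hk
  have hbase : L + u ≤ 4 * k * L * Real.exp (u / (2 * k)) := by
    have h1 : 4 * k * L * (u / (2 * k) + 1) ≤ 4 * k * L * Real.exp (u / (2 * k)) :=
      mul_le_mul_of_nonneg_left (Real.add_one_le_exp _) (by positivity)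
    have h2 : 4 * k * L * (u / (2 * k) + 1) = 2 * L * u + 4 * k * L := by
      field_simp
      ring
    nlinarith
  calc Real.exp (-u) * (L + u) ^ k
      ≤ Real.exp (-u) * (4 * k * L * Real.exp (u / (2 * k))) ^ k := by gcongr
    _ = (4 * k) ^ k * L ^ k * (Real.exp (-u) * Real.exp (k * (u / (2 * k)))) := by
        rw [mul_pow, mul_pow, ← Real.exp_nat_mul]
        ring
    _ = (4 * k) ^ k * L ^ k * Real.exp (-(u / 2)) := by
        rw [← Real.exp_add]
        congr 2
        field_simp
        ring

lemma exp_neg_half_div_le {Y A t : ℝ} (hY : 0 < Y) (hA : 2 * Y ≤ A) (ht : 0 ≤ t) :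
    Real.exp (-(t / Y / 2)) ≤ A / (A + t) := by
  have hA0 : 0 < A := by linarith
  have hle : (A + t) / A ≤ Real.exp (t / Y / 2) := by
    refine le_trans ?_ (Real.add_one_le_exp _)
    have : t / A ≤ t / Y / 2 := by
      rw [div_div]
      gcongr
      linarith
    rw [add_div, div_self hA0.ne']
    linarith
  rw [Real.exp_neg, ← inv_div (A + t) A]
  exact inv_anti₀ (by positivity) hle

lemma log_add_le_log_add_add_div {m Y t : ℝ} (hm : 0 < m) (hY : 0 < Y) (ht : 0 ≤ t) :
    Real.log (m + t) ≤ Real.log (m + Y) + t / Y := by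
  have hprod : m + t ≤ (m + Y) * (t / Y + 1) := by
    have h : (m + Y) * (t / Y + 1) = m + t + (Y + m * (t / Y)) := by
      field_simp
      ring
    have : 0 ≤ Y + m * (t / Y) := by positivity
    linarith
  calc Real.log (m + t) ≤ Real.log ((m + Y) * (t / Y + 1)) :=
        Real.log_le_log (by positivity) hprod
    _ = Real.log (m + Y) + Real.log (t / Y + 1) :=
        Real.log_mul (by positivity) (by positivity)
    _ ≤ Real.log (m + Y) + t / Y := by
        have := Real.log_le_sub_one_of_pos (show 0 < t / Y + 1 by positivity)
        linarith

lemma exp_mul_log_pow_div_le {k : ℕ} (hk : 0 < k) {m Y t : ℝ} (hm : 1 ≤ m) (hY : 0 < Y)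
    (hmY : 2 ≤ m + Y) (ht : 0 ≤ t) :
    Real.exp (-(t / Y)) * Real.log (m + t) ^ k / (m + t) ≤
      2 * (4 * k) ^ k * Real.log (m + Y) ^ k *
        (1 / (m + t) - 1 / (2 * (m + Y) + t)) := by
  have hm0 : 0 < m := by linarith
  have hL : 1 / 2 ≤ Real.log (m + Y) := by
    have := Real.log_le_log two_pos hmY
    linarith [Real.log_two_gt_d9]
  have hL0 : 0 ≤ Real.log (m + Y) := by linarith
  have hlog : 0 ≤ Real.log (m + t) := Real.log_nonneg (by linarith)
  calc Real.exp (-(t / Y)) * Real.log (m + t) ^ k / (m + t)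
      ≤ Real.exp (-(t / Y)) * (Real.log (m + Y) + t / Y) ^ k / (m + t) := by
        gcongr
        exact log_add_le_log_add_add_div hm0 hY ht
    _ ≤ (4 * k) ^ k * Real.log (m + Y) ^ k * Real.exp (-(t / Y / 2)) / (m + t) := by
        refine div_le_div_of_nonneg_right ?_ (by positivity)
        exact exp_neg_mul_add_pow_le hk hL (by positivity)
    _ ≤ (4 * k) ^ k * Real.log (m + Y) ^ k *
          (2 * (m + Y) / (2 * (m + Y) + t)) / (m + t) := by
        gcongr
        exact exp_neg_half_div_le hY (by linarith) ht
    _ = (4 * k) ^ k * Real.log (m + Y) ^ k *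
          (2 * (m + Y) / ((2 * (m + Y) + t) * (m + t))) := by
        rw [mul_div_assoc, div_div]
    _ ≤ (4 * k) ^ k * Real.log (m + Y) ^ k *
          (2 * (1 / (m + t) - 1 / (2 * (m + Y) + t))) := by
        gcongr
        have h : 2 * (1 / (m + t) - 1 / (2 * (m + Y) + t)) =
            2 * (m + 2 * Y) / ((2 * (m + Y) + t) * (m + t)) := by
          field_simp
          ring
        rw [h]
        gcongr
        linarith
    _ = _ := by ring

/-- For every integer `k ≥ 1` there is a constant `C_k > 0`, depending only on `k`, such that
for all positive integers `m`, all integers `q ≥ 2` and all `X > 1`,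
`Σ_{ℓ ≥ 1} e^{−mℓq/X} (log(m + ℓq))^k / (m + ℓq)
  ≤ (C_k/q) ((log m)^k + (log X)^k + (log(m + X/m))^{k+1})`. -/
theorem stmt_14 (k : ℕ) (hk : 0 < k) :
    ∃ C : ℝ, 0 < C ∧ ∀ m q : ℕ, 0 < m → 2 ≤ q → ∀ X : ℝ, 1 < X →
      (∑' ℓ : ℕ, Real.exp (-((m : ℝ) * ((ℓ : ℝ) + 1) * q) / X) *
          (Real.log ((m : ℝ) + ((ℓ : ℝ) + 1) * q)) ^ k / ((m : ℝ) + ((ℓ : ℝ) + 1) * q))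
        ≤ (C / q) * ((Real.log m) ^ k + (Real.log X) ^ k +
            (Real.log ((m : ℝ) + X / m)) ^ (k + 1)) := by
  refine ⟨4 * (4 * k) ^ k, by positivity, fun m q hm hq X hX => ?_⟩
  have hm1 : (1 : ℝ) ≤ m := by exact_mod_cast hm
  have hm0 : (0 : ℝ) < m := by linarith
  have hq0 : (0 : ℝ) < q := by exact_mod_cast (by omega : 0 < q)
  have hY : 0 < X / m := by positivity
  have hmY : 2 ≤ (m : ℝ) + X / m := by
    rcases Nat.lt_or_ge 1 m with h | h
    · have : (2 : ℝ) ≤ m := by exact_mod_cast h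
      linarith
    · obtain rfl : m = 1 := by omega
      norm_num
      linarith
  set L := Real.log ((m : ℝ) + X / m)
  have hL0 : 0 ≤ L := Real.log_nonneg (by linarith)
  have hlogA : Real.log (2 * ((m : ℝ) + X / m) / m) ≤ 2 * L := by
    calc Real.log (2 * ((m : ℝ) + X / m) / m)
        ≤ Real.log (((m : ℝ) + X / m) * ((m : ℝ) + X / m)) := by
          refine Real.log_le_log (by positivity) ?_
          refine (div_le_self (by positivity) hm1).trans ?_
          gcongr
      _ = 2 * L := by
          rw [Real.log_mul (by positivity) (by positivity)]
          ring
  refine (Real.tsum_le_of_sum_range_le (c := 4 * (4 * k) ^ k / q * L ^ (k + 1))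
    (fun ℓ => ?_) fun n => ?_).trans ?_
  · have : 0 ≤ Real.log ((m : ℝ) + ((ℓ : ℝ) + 1) * q) :=
      Real.log_nonneg (le_add_of_le_of_nonneg hm1 (by positivity))
    positivity
  · calc _ ≤ ∑ i ∈ Finset.range n, 2 * (4 * k) ^ k * L ^ k *
          (1 / ((m : ℝ) + ((i : ℝ) + 1) * q) -
            1 / (2 * ((m : ℝ) + X / m) + ((i : ℝ) + 1) * q)) := by
          refine Finset.sum_le_sum fun i _ => ?_
          have h := exp_mul_log_pow_div_le hk hm1 hY hmY
            (show (0 : ℝ) ≤ ((i : ℝ) + 1) * q by positivity)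
          have he : -((m : ℝ) * ((i : ℝ) + 1) * q) / X = -(((i : ℝ) + 1) * q / (X / m)) := by
            field_simp
          rwa [he]
      _ ≤ 2 * (4 * k) ^ k * L ^ k * (Real.log (2 * ((m : ℝ) + X / m) / m) / q) := by
          rw [← Finset.mul_sum]
          gcongr
          exact sum_range_inv_sub_inv_le hm0 (by linarith) hq0 n
      _ ≤ 2 * (4 * k) ^ k * L ^ k * (2 * L / q) := by gcongr
      _ = 4 * (4 * k) ^ k / q * L ^ (k + 1) := by ring
  · have h1 : 0 ≤ Real.log (m : ℝ) ^ k := pow_nonneg (Real.log_nonneg hm1) k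
    have h2 : 0 ≤ Real.log X ^ k := pow_nonneg (Real.log_nonneg hX.le) k
    gcongr
    linarith
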